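/- arXiv:1505.08096 — 3 statements merged into one kernel-verified Lean document; each statement's English description precedes it below -/
import Mathlib

section
/- Vector Gagliardo–Nirenberg inequality: Let N ≥ 4 be an integer, let p > 1 with p < N/(N-4) when N ≥ 5, and let (a_{jk})_{1≤j,k≤m} be a symmetric matrix of nonnegative real numbers. Then there exists a constant C > 0 such that for every m-tuple ψ = (ψ_1,…,ψ_m) of Schwartz functions ℝ^N → ℂ, one has P(ψ) ≤ C (Σ_{j=1}^m ‖Δψ_j‖²)^{(p-1)N/4} (Σ_{j=1}^m ‖ψ_j‖²)^{(N-p(N-4))/4}. -/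
open MeasureTheory Finset

noncomputable section

/-- Laplacian as the sum of second derivatives along the coordinate directions. -/
def lap {N : ℕ} {F : Type*} [NormedAddCommGroup F] [NormedSpace ℝ F]
    (u : EuclideanSpace ℝ (Fin N) → F) (x : EuclideanSpace ℝ (Fin N)) : F :=
  ∑ i : Fin N, iteratedFDeriv ℝ 2 u x (fun _ => EuclideanSpace.single i (1 : ℝ))

/-!
The scalar core is the embedding of the homogeneous Sobolev space `Ḣ^s` into `L^q`, where
`s = d(1/2 - 1/q)`, proved by the frequency splitting of Chemin and Xu. To bound the level set
`{|u| > t}`, cut `𝓕 u` at a radius `R(t)`. Cauchy–Schwarz against the weight `|ξ|^(-2s)` bounds the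
low frequencies in sup norm, and `R(t)` is chosen so that this bound is `t/2`; Chebyshev and
Plancherel then bound the level set by `4 t⁻²` times the integral of `|𝓕 u|²` over `|ξ| ≥ R(t)`.
Since `{|ξ| ≥ R(t)}` is itself a superlevel set of a power of `|ξ|`, integrating in `t` is a layer
cake computation on both sides and returns the `Ḣ^s` energy. For `q = 2p`, Hölder on the Fourier
side interpolates `Ḣ^s` between `L²` and `Ḣ²`, and the energy of `Ḣ²` is at most `‖Δu‖²`. The cross
terms `|ψ_j|^p |ψ_k|^p` reduce to the diagonal ones by the arithmetic–geometric mean inequality.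
-/

open Metric Module FourierTransform Laplacian SchwartzMap
open scoped ENNReal NNReal Pointwise

section MeasureTheory

theorem lintegral_rpow_le_of_meas_lt_le {α β : Type*} [MeasurableSpace α] [MeasurableSpace β]
    {μ : Measure α} {ν : Measure β} {f : α → ℝ} {g : β → ℝ} (hf0 : 0 ≤ᵐ[μ] f)
    (hf : AEMeasurable f μ) (hg0 : 0 ≤ᵐ[ν] g) (hg : AEMeasurable g ν) {q r : ℝ} (hq : 0 < q)
    (hrq : r < q) {c : ℝ≥0}
    (h : ∀ t, 0 < t → μ {x | t < f x} ≤ c * ENNReal.ofReal (t ^ (-r)) * ν {y | t ≤ g y}) :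
    ∫⁻ x, ENNReal.ofReal (f x ^ q) ∂μ ≤
      c * ENNReal.ofReal (q / (q - r)) * ∫⁻ y, ENNReal.ofReal (g y ^ (q - r)) ∂ν := by
  have hqr : 0 < q - r := sub_pos.2 hrq
  have hweight : ∀ t ∈ Set.Ioi (0 : ℝ), μ {x | t < f x} * ENNReal.ofReal (t ^ (q - 1)) ≤
      c * (ν {y | t ≤ g y} * ENNReal.ofReal (t ^ (q - r - 1))) := by
    intro t ht
    have hpow : ENNReal.ofReal (t ^ (-r)) * ENNReal.ofReal (t ^ (q - 1)) =
        ENNReal.ofReal (t ^ (q - r - 1)) := by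
      rw [← ENNReal.ofReal_mul (Real.rpow_nonneg (le_of_lt ht) _), ← Real.rpow_add ht]
      ring_nf
    calc μ {x | t < f x} * ENNReal.ofReal (t ^ (q - 1))
        ≤ c * ENNReal.ofReal (t ^ (-r)) * ν {y | t ≤ g y} * ENNReal.ofReal (t ^ (q - 1)) := by
          gcongr
          exact h t ht
      _ = c * (ν {y | t ≤ g y} * ENNReal.ofReal (t ^ (q - r - 1))) := by
          rw [← hpow]
          ring
  rw [lintegral_rpow_eq_lintegral_meas_lt_mul μ hf0 hf hq,
    lintegral_rpow_eq_lintegral_meas_le_mul ν hg0 hg hqr]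
  calc ENNReal.ofReal q * ∫⁻ t in Set.Ioi 0, μ {x | t < f x} * ENNReal.ofReal (t ^ (q - 1))
      ≤ ENNReal.ofReal q *
          ∫⁻ t in Set.Ioi 0, c * (ν {y | t ≤ g y} * ENNReal.ofReal (t ^ (q - r - 1))) := by
        exact mul_le_mul_right (setLIntegral_mono' measurableSet_Ioi hweight) _
    _ = c * ENNReal.ofReal (q / (q - r)) * (ENNReal.ofReal (q - r) *
          ∫⁻ t in Set.Ioi 0, ν {y | t ≤ g y} * ENNReal.ofReal (t ^ (q - r - 1))) := by
        rw [lintegral_const_mul' _ _ ENNReal.coe_ne_top, mul_assoc (c : ℝ≥0∞),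
          ← mul_assoc (ENNReal.ofReal (q / (q - r))), ← ENNReal.ofReal_mul (by positivity),
          div_mul_cancel₀ q hqr.ne', mul_left_comm]

theorem integral_norm_rpow_mul_norm_rpow_le {α F G : Type*} [MeasurableSpace α]
    {μ : Measure α} [NormedAddCommGroup F] [NormedAddCommGroup G] {f : α → F} {g : α → G} {p : ℝ}
    (hf : Integrable (fun x => ‖f x‖ ^ (2 * p)) μ) (hg : Integrable (fun x => ‖g x‖ ^ (2 * p)) μ) :
    ∫ x, ‖f x‖ ^ p * ‖g x‖ ^ p ∂μ ≤
      (∫ x, ‖f x‖ ^ (2 * p) ∂μ + ∫ x, ‖g x‖ ^ (2 * p) ∂μ) / 2 := by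
  have hsq : ∀ y : ℝ, 0 ≤ y → y ^ (2 * p) = (y ^ p) ^ 2 := fun y hy => by
    rw [mul_comm, Real.rpow_mul hy, Real.rpow_two]
  rw [← integral_add hf hg, ← integral_div]
  refine integral_mono_of_nonneg (.of_forall fun x => by positivity)
    ((hf.add hg).div_const 2) (.of_forall fun x => ?_)
  simp only [hsq _ (norm_nonneg _)]
  linarith [two_mul_le_add_sq (‖f x‖ ^ p) (‖g x‖ ^ p)]

theorem sum_mul_integral_norm_rpow_mul_norm_rpow_le {α F ι : Type*} [MeasurableSpace α]
    {μ : Measure α} [NormedAddCommGroup F] [Fintype ι] (a : ι → ι → ℝ) {f : ι → α → F} {p B : ℝ}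
    (hf : ∀ j, Integrable (fun x => ‖f j x‖ ^ (2 * p)) μ)
    (hB : ∀ j, ∫ x, ‖f j x‖ ^ (2 * p) ∂μ ≤ B) :
    ∑ j, ∑ k, a j k * ∫ x, ‖f j x‖ ^ p * ‖f k x‖ ^ p ∂μ ≤ (∑ j, ∑ k, |a j k|) * B := by
  simp_rw [Finset.sum_mul]
  refine Finset.sum_le_sum fun j _ => Finset.sum_le_sum fun k _ => ?_
  have hjk : ∫ x, ‖f j x‖ ^ p * ‖f k x‖ ^ p ∂μ ≤ B :=
    (integral_norm_rpow_mul_norm_rpow_le (hf j) (hf k)).trans (by linarith [hB j, hB k])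
  calc a j k * ∫ x, ‖f j x‖ ^ p * ‖f k x‖ ^ p ∂μ
      ≤ |a j k| * ∫ x, ‖f j x‖ ^ p * ‖f k x‖ ^ p ∂μ :=
        mul_le_mul_of_nonneg_right (le_abs_self _) (by positivity)
    _ ≤ |a j k| * B := by gcongr

end MeasureTheory

section RieszWeight

variable {E F : Type*} [NormedAddCommGroup E] [NormedSpace ℝ E] [FiniteDimensional ℝ E]
  [MeasurableSpace E] [BorelSpace E] (μ : Measure E) [μ.IsAddHaarMeasure] [NormedAddCommGroup F]

theorem setIntegral_ball_norm_rpow (r : ℝ) {R : ℝ} (hR : 0 < R) :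
    ∫ x in ball (0 : E) R, ‖x‖ ^ r ∂μ =
      R ^ (finrank ℝ E + r) * ∫ x in ball (0 : E) 1, ‖x‖ ^ r ∂μ := by
  have hball : R • ball (0 : E) 1 = ball 0 R := by
    rw [_root_.smul_ball hR.ne', smul_zero, mul_one, Real.norm_of_nonneg hR.le]
  have hscale := Measure.setIntegral_comp_smul_of_pos μ (fun x : E => ‖x‖ ^ r) (ball 0 1) hR
  simp_rw [norm_smul, Real.norm_of_nonneg hR.le, Real.mul_rpow hR.le (norm_nonneg _)] at hscale
  rw [integral_const_mul, hball, smul_eq_mul, eq_inv_mul_iff_mul_eq₀ (by positivity)] at hscale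
  rw [← hscale, Real.rpow_add hR, Real.rpow_natCast, mul_assoc]

theorem lintegral_ball_enorm_rpow_neg [Nontrivial E] {b : ℝ} (hb : b < finrank ℝ E) {R : ℝ}
    (hR : 0 < R) :
    ∫⁻ x in ball (0 : E) R, ‖x‖ₑ ^ (-b) ∂μ =
      ENNReal.ofReal (R ^ (finrank ℝ E - b) * ∫ x in ball (0 : E) 1, ‖x‖ ^ (-b) ∂μ) := by
  have hint : IntegrableOn (fun x : E => ‖x‖ ^ (-b)) (ball 0 R) μ :=
    integrableOn_ball_of_norm_le_rpow (C := 1) finrank_pos hb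
      (.of_forall fun x => by rw [one_mul, Real.norm_of_nonneg (by positivity)])
      (measurable_norm.pow_const _).aestronglyMeasurable
  rw [sub_eq_add_neg, ← setIntegral_ball_norm_rpow μ (-b) hR,
    ofReal_integral_eq_lintegral_ofReal hint (.of_forall fun x => by positivity)]
  refine lintegral_congr_ae (ae_restrict_of_ae ?_)
  filter_upwards [Measure.ae_ne μ (0 : E)] with x hx
  rw [← ofReal_norm, ENNReal.ofReal_rpow_of_pos (norm_pos_iff.2 hx)]

theorem exists_lintegral_ball_enorm_le [Nontrivial E] {s : ℝ} (hs : 2 * s < finrank ℝ E) :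
    ∃ K : ℝ, 0 < K ∧ ∀ {g : E → F}, AEStronglyMeasurable g μ → ∀ R : ℝ, 0 < R →
      ∫⁻ ξ in ball 0 R, ‖g ξ‖ₑ ∂μ ≤ ENNReal.ofReal (K * R ^ (finrank ℝ E / 2 - s)) *
        (∫⁻ ξ, ‖ξ‖ₑ ^ (2 * s) * ‖g ξ‖ₑ ^ 2 ∂μ) ^ (1 / 2 : ℝ) := by
  set W := ∫ x in ball (0 : E) 1, ‖x‖ ^ (-(2 * s)) ∂μ
  have hW0 : 0 ≤ W := by positivity
  refine ⟨√(W + 1), by positivity, fun {g} hg R hR => ?_⟩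
  have hfactor : ∀ᵐ ξ ∂μ, ‖g ξ‖ₑ =
      (‖ξ‖ₑ ^ (-(2 * s))) ^ (1 / 2 : ℝ) * (‖ξ‖ₑ ^ (2 * s) * ‖g ξ‖ₑ ^ 2) ^ (1 / 2 : ℝ) := by
    filter_upwards [Measure.ae_ne μ (0 : E)] with ξ hξ
    rw [← ENNReal.mul_rpow_of_nonneg _ _ (by norm_num), ← mul_assoc,
      ← ENNReal.rpow_add _ _ (enorm_ne_zero.2 hξ) enorm_ne_top, neg_add_cancel, ENNReal.rpow_zero,
      one_mul, ← ENNReal.rpow_natCast, ← ENNReal.rpow_mul]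
    norm_num
  have hweight : (∫⁻ ξ in ball (0 : E) R, ‖ξ‖ₑ ^ (-(2 * s)) ∂μ) ^ (1 / 2 : ℝ) ≤
      ENNReal.ofReal (√(W + 1) * R ^ (finrank ℝ E / 2 - s)) := by
    rw [lintegral_ball_enorm_rpow_neg μ hs hR, ENNReal.ofReal_rpow_of_nonneg (by positivity)
      (by norm_num), mul_comm, Real.mul_rpow hW0 (by positivity), ← Real.rpow_mul hR.le,
      ← Real.sqrt_eq_rpow, mul_one_div, sub_div, mul_div_cancel_left₀ s two_ne_zero]
    gcongr
    exact le_add_of_nonneg_right zero_le_one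
  calc ∫⁻ ξ in ball 0 R, ‖g ξ‖ₑ ∂μ
      = ∫⁻ ξ in ball 0 R, (‖ξ‖ₑ ^ (-(2 * s))) ^ (1 / 2 : ℝ) *
          (‖ξ‖ₑ ^ (2 * s) * ‖g ξ‖ₑ ^ 2) ^ (1 / 2 : ℝ) ∂μ :=
        lintegral_congr_ae (ae_restrict_of_ae hfactor)
    _ ≤ (∫⁻ ξ in ball (0 : E) R, ‖ξ‖ₑ ^ (-(2 * s)) ∂μ) ^ (1 / 2 : ℝ) *
          (∫⁻ ξ in ball 0 R, ‖ξ‖ₑ ^ (2 * s) * ‖g ξ‖ₑ ^ 2 ∂μ) ^ (1 / 2 : ℝ) :=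
        ENNReal.lintegral_mul_norm_pow_le (by fun_prop) (by fun_prop) (by norm_num)
          (by norm_num) (by norm_num)
    _ ≤ ENNReal.ofReal (√(W + 1) * R ^ (finrank ℝ E / 2 - s)) *
          (∫⁻ ξ, ‖ξ‖ₑ ^ (2 * s) * ‖g ξ‖ₑ ^ 2 ∂μ) ^ (1 / 2 : ℝ) := by
        gcongr
        exact Measure.restrict_le_self

end RieszWeight

section Fourier

variable {E F : Type*} [NormedAddCommGroup E] [InnerProductSpace ℝ E] [FiniteDimensional ℝ E]
  [MeasurableSpace E] [BorelSpace E] [NormedAddCommGroup F]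

theorem integrable_schwartz_norm_rpow [NormedSpace ℝ F] (u : 𝓢(E, F)) {q : ℝ} (hq : 0 < q) :
    Integrable fun x => ‖u x‖ ^ q := by
  simpa only [ENNReal.toReal_ofReal hq.le] using
    (u.memLp (ENNReal.ofReal q)).integrable_norm_rpow (by simpa using hq) ENNReal.ofReal_ne_top

theorem ofReal_integral_schwartz_norm_rpow [NormedSpace ℝ F] (u : 𝓢(E, F)) {q : ℝ} (hq : 0 < q) :
    ENNReal.ofReal (∫ x, ‖u x‖ ^ q) = ∫⁻ x, ‖u x‖ₑ ^ q := by
  rw [ofReal_integral_eq_lintegral_ofReal (integrable_schwartz_norm_rpow u hq)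
    (.of_forall fun x => by positivity)]
  simp_rw [← ENNReal.ofReal_rpow_of_nonneg (norm_nonneg _) hq.le, ofReal_norm]

theorem ofReal_integral_schwartz_norm_sq [NormedSpace ℝ F] (u : 𝓢(E, F)) :
    ENNReal.ofReal (∫ x, ‖u x‖ ^ 2) = ∫⁻ x, ‖u x‖ₑ ^ 2 := by
  exact_mod_cast ofReal_integral_schwartz_norm_rpow u two_pos

section NormedSpace

variable [NormedSpace ℂ F]

theorem enorm_fourierInv_le_lintegral (g : E → F) (x : E) :
    ‖𝓕⁻ g x‖ₑ ≤ ∫⁻ ξ, ‖g ξ‖ₑ := by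
  rw [Real.fourierInv_eq]
  exact (enorm_integral_le_lintegral_enorm _).trans_eq (by simp [← ofReal_norm])

/-- The square of the homogeneous Sobolev seminorm of order `s`, computed on the Fourier side; the
weight is `|ξ|^(2s)` rather than `|2πξ|^(2s)`. -/
def sobolevEnergy (s : ℝ) (u : 𝓢(E, F)) : ℝ≥0∞ :=
  ∫⁻ ξ, ‖ξ‖ₑ ^ (2 * s) * ‖𝓕 u ξ‖ₑ ^ 2

theorem sobolevEnergy_interpolation {s₀ s₁ θ : ℝ} (hs₀ : 0 ≤ s₀) (hs₁ : 0 ≤ s₁) (hθ₀ : 0 ≤ θ)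
    (hθ₁ : θ ≤ 1) (u : 𝓢(E, F)) :
    sobolevEnergy ((1 - θ) * s₀ + θ * s₁) u ≤
      sobolevEnergy s₀ u ^ (1 - θ) * sobolevEnergy s₁ u ^ θ := by
  have hu := (𝓕 u).continuous
  have hθ' : 0 ≤ 1 - θ := sub_nonneg.2 hθ₁
  refine le_of_eq_of_le (lintegral_congr fun ξ => ?_) (ENNReal.lintegral_mul_norm_pow_le
    (by fun_prop) (by fun_prop) hθ' hθ₀ (sub_add_cancel 1 θ))
  rw [ENNReal.mul_rpow_of_nonneg _ _ hθ', ENNReal.mul_rpow_of_nonneg _ _ hθ₀,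
    mul_mul_mul_comm, ← ENNReal.rpow_add_of_nonneg _ _ hθ' hθ₀, sub_add_cancel, ENNReal.rpow_one,
    ← ENNReal.rpow_mul, ← ENNReal.rpow_mul,
    ← ENNReal.rpow_add_of_nonneg _ _ (by positivity) (by positivity)]
  ring_nf

theorem lintegral_norm_rpow_withDensity_fourier {s : ℝ} (hs : 0 ≤ s) (u : 𝓢(E, F)) :
    ∫⁻ ξ, ENNReal.ofReal (‖ξ‖ ^ (2 * s)) ∂volume.withDensity (fun ξ => ‖𝓕 u ξ‖ₑ ^ 2) =
      sobolevEnergy s u := by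
  rw [lintegral_withDensity_eq_lintegral_mul _ ((𝓕 u).continuous.enorm.measurable.pow_const 2)
    (by fun_prop), sobolevEnergy]
  refine lintegral_congr fun ξ => ?_
  rw [Pi.mul_apply, mul_comm, ← ENNReal.ofReal_rpow_of_nonneg (norm_nonneg ξ) (by positivity),
    ofReal_norm]

theorem fourier_laplacian_apply [CompleteSpace F] (u : 𝓢(E, F)) (ξ : E) :
    𝓕 (Δ u) ξ = -((2 * Real.pi) ^ 2 * ‖ξ‖ ^ 2) • 𝓕 u ξ := by
  rw [SchwartzMap.laplacian_eq_fourierMultiplierCLM, SchwartzMap.fourierMultiplierCLM_apply,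
    FourierTransform.fourier_smul, FourierTransform.fourier_fourierInv_eq, smul_apply,
    SchwartzMap.smulLeftCLM_apply_apply (by fun_prop), smul_smul]
  simp

theorem lintegral_enorm_rpow_le_of_volume_lt_norm_le {q β B c : ℝ} (hq : 2 < q) (hβ : 0 ≤ β)
    (hc : 0 ≤ c) (hB : 0 ≤ B) (u : 𝓢(E, F))
    (h : ∀ t, 0 < t → volume {x | t < ‖u x‖} ≤ ENNReal.ofReal c * ENNReal.ofReal (t ^ (-2 : ℝ)) *
      ∫⁻ ξ in {ξ | t ≤ B * ‖ξ‖ ^ β}, ‖𝓕 u ξ‖ₑ ^ 2) :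
    ∫⁻ x, ‖u x‖ₑ ^ q ≤ ENNReal.ofReal (c * (q / (q - 2)) * B ^ (q - 2)) *
      sobolevEnergy (β * (q - 2) / 2) u := by
  have hq0 : 0 < q := two_pos.trans hq
  have : 0 < q - 2 := sub_pos.2 hq
  have hu_meas : Measurable fun x => ‖u x‖ := u.continuous.norm.measurable
  have hg_meas : Measurable fun ξ : E => B * ‖ξ‖ ^ β := by fun_prop
  have hlayer := lintegral_rpow_le_of_meas_lt_le (μ := volume)
    (ν := volume.withDensity fun ξ => ‖𝓕 u ξ‖ₑ ^ 2) (f := fun x => ‖u x‖)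
    (g := fun ξ => B * ‖ξ‖ ^ β) (c := c.toNNReal) (.of_forall fun x => norm_nonneg _)
    hu_meas.aemeasurable (.of_forall fun ξ => by positivity) hg_meas.aemeasurable hq0 hq
    (fun t ht => by
      rw [withDensity_apply _ (measurableSet_le measurable_const hg_meas)]
      exact h t ht)
  have hweight : ∀ ξ : E, (B * ‖ξ‖ ^ β) ^ (q - 2) =
      B ^ (q - 2) * ‖ξ‖ ^ (2 * (β * (q - 2) / 2)) := fun ξ => by
    rw [Real.mul_rpow hB (by positivity), ← Real.rpow_mul (norm_nonneg ξ),
      mul_div_cancel₀ _ two_ne_zero]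
  calc ∫⁻ x, ‖u x‖ₑ ^ q = ∫⁻ x, ENNReal.ofReal (‖u x‖ ^ q) := by
        simp_rw [← ENNReal.ofReal_rpow_of_nonneg (norm_nonneg _) hq0.le, ofReal_norm]
    _ ≤ ENNReal.ofReal c * ENNReal.ofReal (q / (q - 2)) * ∫⁻ ξ, ENNReal.ofReal
          ((B * ‖ξ‖ ^ β) ^ (q - 2)) ∂volume.withDensity fun ξ => ‖𝓕 u ξ‖ₑ ^ 2 := hlayer
    _ = ENNReal.ofReal (c * (q / (q - 2)) * B ^ (q - 2)) *
          sobolevEnergy (β * (q - 2) / 2) u := by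
        simp_rw [hweight, ENNReal.ofReal_mul (show 0 ≤ B ^ (q - 2) by positivity)]
        rw [lintegral_const_mul' _ _ ENNReal.ofReal_ne_top,
          lintegral_norm_rpow_withDensity_fourier (by positivity),
          ENNReal.ofReal_mul (by positivity), ENNReal.ofReal_mul hc,
          mul_assoc _ _ (sobolevEnergy _ u)]

end NormedSpace

variable [InnerProductSpace ℂ F] [CompleteSpace F]

theorem lintegral_enorm_sq_fourier (u : 𝓢(E, F)) : ∫⁻ ξ, ‖𝓕 u ξ‖ₑ ^ 2 = ∫⁻ x, ‖u x‖ₑ ^ 2 := by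
  rw [← ofReal_integral_schwartz_norm_sq, ← ofReal_integral_schwartz_norm_sq,
    SchwartzMap.integral_norm_sq_fourier]

theorem sobolevEnergy_zero (u : 𝓢(E, F)) : sobolevEnergy 0 u = ∫⁻ x, ‖u x‖ₑ ^ 2 := by
  simp [sobolevEnergy, lintegral_enorm_sq_fourier]

theorem sobolevEnergy_two_le (u : 𝓢(E, F)) : sobolevEnergy 2 u ≤ ∫⁻ x, ‖Δ u x‖ₑ ^ 2 := by
  rw [← lintegral_enorm_sq_fourier]
  refine lintegral_mono fun ξ => ?_
  have hle : ‖ξ‖ ^ 2 ≤ (2 * Real.pi) ^ 2 * ‖ξ‖ ^ 2 :=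
    le_mul_of_one_le_left (by positivity) (one_le_pow₀ (by linarith [Real.pi_gt_three]))
  calc ‖ξ‖ₑ ^ (2 * 2 : ℝ) * ‖𝓕 u ξ‖ₑ ^ 2 = (‖‖ξ‖ ^ 2‖ₑ * ‖𝓕 u ξ‖ₑ) ^ 2 := by
        rw [mul_pow, enorm_pow, enorm_norm, ← pow_mul]
        norm_cast
    _ ≤ ‖𝓕 (Δ u) ξ‖ₑ ^ 2 := by
        rw [fourier_laplacian_apply, enorm_smul, enorm_neg]
        gcongr
        rw [Real.enorm_of_nonneg (by positivity), Real.enorm_of_nonneg (by positivity)]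
        exact ENNReal.ofReal_le_ofReal hle

theorem exists_frequency_split (u : 𝓢(E, F)) {R : ℝ} (hR : 0 < R) :
    ∃ v w : 𝓢(E, F), u = v + w ∧ (∀ x, ‖v x‖ₑ ≤ ∫⁻ ξ in ball 0 (2 * R), ‖𝓕 u ξ‖ₑ) ∧
      ∫⁻ x, ‖w x‖ₑ ^ 2 ≤ ∫⁻ ξ in {ξ | R ≤ ‖ξ‖}, ‖𝓕 u ξ‖ₑ ^ 2 := by
  let χ : ContDiffBump (0 : E) := ⟨R, 2 * R, hR, by linarith⟩
  let low : 𝓢(E, F) := SchwartzMap.smulLeftCLM F χ (𝓕 u)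
  have low_apply : ∀ ξ, low ξ = χ ξ • 𝓕 u ξ := SchwartzMap.smulLeftCLM_apply_apply
    (χ.hasCompactSupport.hasTemperateGrowth χ.contDiff) (𝓕 u)
  have high_apply : ∀ ξ, (𝓕 u - low) ξ = (1 - χ ξ) • 𝓕 u ξ := fun ξ => by
    rw [sub_apply, low_apply, sub_smul, one_smul]
  refine ⟨𝓕⁻ low, 𝓕⁻ (𝓕 u - low), ?_, fun x => ?_, ?_⟩
  · rw [← FourierTransform.fourierInv_add, add_sub_cancel, FourierTransform.fourierInv_fourier_eq]
  · rw [SchwartzMap.fourierInv_coe]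
    refine (enorm_fourierInv_le_lintegral low x).trans ?_
    rw [← lintegral_indicator measurableSet_ball]
    refine lintegral_mono fun ξ => ?_
    by_cases hξ : ξ ∈ ball (0 : E) (2 * R)
    · rw [Set.indicator_of_mem hξ, low_apply, enorm_smul, Real.enorm_of_nonneg χ.nonneg]
      exact mul_le_of_le_one_left zero_le (ENNReal.ofReal_le_one.2 χ.le_one)
    · have hχ : χ ξ = 0 := χ.zero_of_le_dist (not_lt.1 hξ)
      simp [low_apply, hχ]
  · rw [← lintegral_enorm_sq_fourier, FourierTransform.fourier_fourierInv_eq,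
      ← lintegral_indicator (measurableSet_le measurable_const measurable_norm)]
    refine lintegral_mono fun ξ => ?_
    by_cases hξ : R ≤ ‖ξ‖
    · rw [Set.indicator_of_mem (show ξ ∈ {ξ : E | R ≤ ‖ξ‖} from hξ), high_apply, enorm_smul,
        Real.enorm_of_nonneg (sub_nonneg.2 χ.le_one)]
      gcongr
      exact mul_le_of_le_one_left zero_le
        (ENNReal.ofReal_le_one.2 (sub_le_self 1 χ.nonneg))
    · have hχ : χ ξ = 1 := χ.one_of_mem_closedBall (by simpa using (not_le.1 hξ).le)
      simp [high_apply, hχ]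

theorem volume_lt_norm_le_lintegral_fourier (u : 𝓢(E, F)) {R t : ℝ} (hR : 0 < R) (ht : 0 < t)
    (hlow : ∫⁻ ξ in ball 0 (2 * R), ‖𝓕 u ξ‖ₑ ≤ ENNReal.ofReal (t / 2)) :
    volume {x | t < ‖u x‖} ≤
      4 * ENNReal.ofReal (t ^ (-2 : ℝ)) * ∫⁻ ξ in {ξ | R ≤ ‖ξ‖}, ‖𝓕 u ξ‖ₑ ^ 2 := by
  obtain ⟨v, w, huvw, hv, hw⟩ := exists_frequency_split u hR
  have hlevel : {x | t < ‖u x‖} ⊆ {x | ENNReal.ofReal (t / 2) ^ 2 ≤ ‖w x‖ₑ ^ 2} := fun x hx => by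
    have hvx : ‖v x‖ ≤ t / 2 := by
      rw [← ENNReal.ofReal_le_ofReal_iff (by positivity), ofReal_norm]
      exact (hv x).trans hlow
    have hux : ‖u x‖ ≤ ‖v x‖ + ‖w x‖ := huvw ▸ norm_add_le (v x) (w x)
    have hwx : t / 2 ≤ ‖w x‖ := by linarith [hx.out]
    rw [Set.mem_ofPred_eq, ← ofReal_norm]
    gcongr
  have hconst : (ENNReal.ofReal (t / 2) ^ 2)⁻¹ = 4 * ENNReal.ofReal (t ^ (-2 : ℝ)) := by
    rw [← ENNReal.ofReal_pow (by positivity), ← ENNReal.ofReal_inv_of_pos (by positivity),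
      ← ENNReal.ofReal_ofNat, ← ENNReal.ofReal_mul (by norm_num), Real.rpow_neg ht.le,
      Real.rpow_two, div_pow, inv_div, div_eq_mul_inv]
    norm_num
  have hmeas : AEMeasurable fun x => ‖w x‖ₑ ^ 2 := by
    have := w.continuous
    fun_prop
  calc volume {x | t < ‖u x‖} ≤ volume {x | ENNReal.ofReal (t / 2) ^ 2 ≤ ‖w x‖ₑ ^ 2} :=
        measure_mono hlevel
    _ ≤ (∫⁻ x, ‖w x‖ₑ ^ 2) / ENNReal.ofReal (t / 2) ^ 2 :=
        meas_ge_le_lintegral_div hmeas (by positivity) (by finiteness)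
    _ ≤ 4 * ENNReal.ofReal (t ^ (-2 : ℝ)) * ∫⁻ ξ in {ξ | R ≤ ‖ξ‖}, ‖𝓕 u ξ‖ₑ ^ 2 := by
        rw [ENNReal.div_eq_inv_mul, hconst]
        gcongr

end Fourier

section Sobolev

variable {E F : Type*} [NormedAddCommGroup E] [InnerProductSpace ℝ E] [FiniteDimensional ℝ E]
  [Nontrivial E] [MeasurableSpace E] [BorelSpace E] [NormedAddCommGroup F] [InnerProductSpace ℂ F]
  [CompleteSpace F]

variable (E F) in
theorem exists_volume_lt_norm_le {s : ℝ} (hs : 2 * s < finrank ℝ E) :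
    ∃ K : ℝ, 0 < K ∧ ∀ (u : 𝓢(E, F)) (A : ℝ), 0 < A → sobolevEnergy s u ≤ ENNReal.ofReal A ^ 2 →
      ∀ t : ℝ, 0 < t → volume {x | t < ‖u x‖} ≤ 4 * ENNReal.ofReal (t ^ (-2 : ℝ)) *
        ∫⁻ ξ in {ξ | t ≤ K * A * ‖ξ‖ ^ (finrank ℝ E / 2 - s)}, ‖𝓕 u ξ‖ₑ ^ 2 := by
  obtain ⟨K, hK, hball⟩ := exists_lintegral_ball_enorm_le (F := F) (volume : Measure E) hs
  set α := (finrank ℝ E : ℝ) / 2 - s with hα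
  have hα0 : 0 < α := by linarith
  refine ⟨2 * K * 2 ^ α, by positivity, fun u A hA hu t ht => ?_⟩
  -- The cutoff radius `R` solves `K * (2 * R) ^ α * A = t / 2`.
  set R := (t / (2 * K * A)) ^ α⁻¹ / 2 with hR
  have hR0 : 0 < R := by positivity
  have hRα : (2 * R) ^ α = t / (2 * K * A) := by
    rw [hR, mul_div_cancel₀ _ two_ne_zero, Real.rpow_inv_rpow (by positivity) hα0.ne']
  have hlow : ∫⁻ ξ in ball 0 (2 * R), ‖𝓕 u ξ‖ₑ ≤ ENNReal.ofReal (t / 2) := by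
    calc ∫⁻ ξ in ball 0 (2 * R), ‖𝓕 u ξ‖ₑ
        ≤ ENNReal.ofReal (K * (2 * R) ^ α) * sobolevEnergy s u ^ (1 / 2 : ℝ) :=
          hball (𝓕 u).continuous.aestronglyMeasurable (2 * R) (by positivity)
      _ ≤ ENNReal.ofReal (K * (2 * R) ^ α) * (ENNReal.ofReal A ^ 2) ^ (1 / 2 : ℝ) := by gcongr
      _ = ENNReal.ofReal (t / 2) := by
          rw [← ENNReal.rpow_natCast_mul, Nat.cast_ofNat, mul_one_div_cancel two_ne_zero,
            ENNReal.rpow_one, ← ENNReal.ofReal_mul (by positivity), hRα]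
          congr 1
          field_simp
  refine (volume_lt_norm_le_lintegral_fourier u hR0 ht hlow).trans
    (mul_le_mul_right (lintegral_mono_set fun ξ (hξ : R ≤ ‖ξ‖) => ?_) _)
  calc t = 2 * K * A * (2 * R) ^ α := by
        rw [hRα]
        field_simp
    _ ≤ 2 * K * A * (2 * ‖ξ‖) ^ α := by gcongr
    _ = 2 * K * 2 ^ α * A * ‖ξ‖ ^ α := by
        rw [Real.mul_rpow zero_le_two (norm_nonneg ξ)]
        ring

variable (E F) in
theorem exists_lintegral_enorm_rpow_le_mul_sobolevEnergy {q : ℝ} (hq : 2 < q) :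
    ∃ C : ℝ, 0 < C ∧ ∀ (u : 𝓢(E, F)) (A : ℝ), 0 < A →
      sobolevEnergy (finrank ℝ E * (1 / 2 - 1 / q)) u ≤ ENNReal.ofReal A ^ 2 →
      ∫⁻ x, ‖u x‖ₑ ^ q ≤ ENNReal.ofReal (C * A ^ (q - 2)) *
        sobolevEnergy (finrank ℝ E * (1 / 2 - 1 / q)) u := by
  have hd : (0 : ℝ) < finrank ℝ E := by exact_mod_cast finrank_pos
  have : 0 < q := two_pos.trans hq
  have hq2 : 0 < q - 2 := sub_pos.2 hq
  set s : ℝ := finrank ℝ E * (1 / 2 - 1 / q) with hs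
  have hα : (finrank ℝ E : ℝ) / 2 - s = finrank ℝ E / q := by
    rw [hs]
    ring
  have hα0 : 0 < (finrank ℝ E : ℝ) / q := by positivity
  have hαq : (finrank ℝ E : ℝ) / q * (q - 2) / 2 = s := by
    rw [hs]
    field_simp
  obtain ⟨K, hK, hweak⟩ := exists_volume_lt_norm_le E F (s := s) (by linarith)
  refine ⟨4 * (q / (q - 2)) * K ^ (q - 2), by positivity, fun u A hA hu => ?_⟩
  calc ∫⁻ x, ‖u x‖ₑ ^ q
      ≤ ENNReal.ofReal (4 * (q / (q - 2)) * (K * A) ^ (q - 2)) * sobolevEnergy s u := by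
        rw [← hαq]
        exact lintegral_enorm_rpow_le_of_volume_lt_norm_le hq hα0.le zero_le_four (by positivity) u
          fun t ht => by simpa only [ENNReal.ofReal_ofNat, hα] using hweak u A hA hu t ht
    _ = ENNReal.ofReal (4 * (q / (q - 2)) * K ^ (q - 2) * A ^ (q - 2)) * sobolevEnergy s u := by
        rw [Real.mul_rpow hK.le hA.le, mul_assoc _ (K ^ _)]

variable (E F) in
theorem exists_lintegral_enorm_rpow_le_sobolevEnergy_rpow {q : ℝ} (hq : 2 < q) :
    ∃ C : ℝ, 0 < C ∧ ∀ u : 𝓢(E, F), ∫⁻ x, ‖u x‖ₑ ^ q ≤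
      ENNReal.ofReal C * sobolevEnergy (finrank ℝ E * (1 / 2 - 1 / q)) u ^ (q / 2) := by
  obtain ⟨C, hC, hbound⟩ := exists_lintegral_enorm_rpow_le_mul_sobolevEnergy E F hq
  refine ⟨C, hC, fun u => ?_⟩
  have hq2 : 0 < q / 2 := by linarith
  have hu := hbound u
  generalize sobolevEnergy (finrank ℝ E * (1 / 2 - 1 / q)) u = e at hu ⊢
  rcases eq_or_ne e 0 with rfl | hpos
  · simpa [hq2] using hu 1 one_pos zero_le
  rcases eq_or_ne e ∞ with rfl | hfin
  · simp [hq2, hC]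
  obtain ⟨A, hA, rfl⟩ : ∃ A : ℝ, 0 < A ∧ e = ENNReal.ofReal A ^ 2 := by
    refine ⟨√e.toReal, Real.sqrt_pos.2 (ENNReal.toReal_pos hpos hfin), ?_⟩
    rw [← ENNReal.ofReal_pow (Real.sqrt_nonneg _), Real.sq_sqrt ENNReal.toReal_nonneg,
      ENNReal.ofReal_toReal hfin]
  refine (hu A hA le_rfl).trans_eq ?_
  rw [← ENNReal.ofReal_pow hA.le, ENNReal.ofReal_rpow_of_pos (by positivity),
    ← ENNReal.ofReal_mul (by positivity), ← ENNReal.ofReal_mul hC.le, mul_assoc,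
    ← Real.rpow_natCast, ← Real.rpow_add hA, ← Real.rpow_mul hA.le]
  ring_nf

variable (E F) in
theorem exists_lintegral_enorm_rpow_le_laplacian {p : ℝ} (hp : 1 < p)
    (hpd : p * ((finrank ℝ E : ℝ) - 4) ≤ finrank ℝ E) :
    ∃ C : ℝ, 0 < C ∧ ∀ u : 𝓢(E, F), ∫⁻ x, ‖u x‖ₑ ^ (2 * p) ≤
      ENNReal.ofReal C * ((∫⁻ x, ‖Δ u x‖ₑ ^ 2) ^ ((p - 1) * finrank ℝ E / 4) *
        (∫⁻ x, ‖u x‖ₑ ^ 2) ^ ((finrank ℝ E - p * ((finrank ℝ E : ℝ) - 4)) / 4)) := by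
  have hp0 : 0 < p := one_pos.trans hp
  obtain ⟨C, hC, hsobolev⟩ := exists_lintegral_enorm_rpow_le_sobolevEnergy_rpow E F
    (q := 2 * p) (by linarith)
  refine ⟨C, hC, fun u => (hsobolev u).trans ?_⟩
  set θ : ℝ := (p - 1) * finrank ℝ E / 4 / p with hθ
  have hθp : θ * p = (p - 1) * finrank ℝ E / 4 := div_mul_cancel₀ _ hp0.ne'
  have hθp' : (1 - θ) * p = (finrank ℝ E - p * ((finrank ℝ E : ℝ) - 4)) / 4 := by
    rw [sub_mul, hθp]
    ring
  have hθ0 : 0 ≤ θ := by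
    have := sub_pos.2 hp
    positivity
  have hθ1 : 0 ≤ 1 - θ := nonneg_of_mul_nonneg_left (by rw [hθp']; linarith) hp0
  have hs : finrank ℝ E * (1 / 2 - 1 / (2 * p)) = (1 - θ) * 0 + θ * 2 := by
    rw [hθ]
    field_simp
    ring
  rw [hs, mul_div_cancel_left₀ p two_ne_zero, ← hθp, ← hθp', ENNReal.rpow_mul, ENNReal.rpow_mul,
    ← ENNReal.mul_rpow_of_nonneg _ _ hp0.le, mul_comm (_ ^ θ)]
  gcongr
  calc sobolevEnergy ((1 - θ) * 0 + θ * 2) u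
      ≤ sobolevEnergy 0 u ^ (1 - θ) * sobolevEnergy 2 u ^ θ :=
        sobolevEnergy_interpolation le_rfl zero_le_two hθ0 (sub_nonneg.1 hθ1) u
    _ ≤ (∫⁻ x, ‖u x‖ₑ ^ 2) ^ (1 - θ) * (∫⁻ x, ‖Δ u x‖ₑ ^ 2) ^ θ := by
        rw [sobolevEnergy_zero]
        gcongr
        exact sobolevEnergy_two_le u

variable (E F) in
theorem exists_integral_norm_rpow_le_laplacian {p : ℝ} (hp : 1 < p)
    (hpd : p * ((finrank ℝ E : ℝ) - 4) ≤ finrank ℝ E) :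
    ∃ C : ℝ, 0 < C ∧ ∀ u : 𝓢(E, F), ∫ x, ‖u x‖ ^ (2 * p) ≤
      C * ((∫ x, ‖Δ u x‖ ^ 2) ^ ((p - 1) * finrank ℝ E / 4) *
        (∫ x, ‖u x‖ ^ 2) ^ ((finrank ℝ E - p * ((finrank ℝ E : ℝ) - 4)) / 4)) := by
  have : 0 < p := one_pos.trans hp
  have : 0 < p - 1 := sub_pos.2 hp
  obtain ⟨C, hC, hbound⟩ := exists_lintegral_enorm_rpow_le_laplacian E F hp hpd
  refine ⟨C, hC, fun u => ?_⟩
  rw [← ENNReal.ofReal_le_ofReal_iff (by positivity), ENNReal.ofReal_mul hC.le,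
    ENNReal.ofReal_mul (by positivity),
    ← ENNReal.ofReal_rpow_of_nonneg (by positivity) (by positivity),
    ← ENNReal.ofReal_rpow_of_nonneg (by positivity) (by linarith),
    ofReal_integral_schwartz_norm_rpow u (by positivity), ofReal_integral_schwartz_norm_sq,
    ofReal_integral_schwartz_norm_sq]
  exact hbound u

variable (E F) in
theorem vector_gagliardo_nirenberg_general {ι : Type*} [Fintype ι] {p : ℝ} (hp : 1 < p)
    (hpd : p * ((finrank ℝ E : ℝ) - 4) ≤ finrank ℝ E) (a : ι → ι → ℝ) :
    ∃ C : ℝ, 0 < C ∧ ∀ ψ : ι → 𝓢(E, F),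
      (1 / (2 * p)) * ∑ j, ∑ k, a j k * ∫ x, ‖ψ j x‖ ^ p * ‖ψ k x‖ ^ p ≤
        C * (∑ j, ∫ x, ‖Δ (ψ j) x‖ ^ 2) ^ ((p - 1) * finrank ℝ E / 4) *
          (∑ j, ∫ x, ‖ψ j x‖ ^ 2) ^ ((finrank ℝ E - p * ((finrank ℝ E : ℝ) - 4)) / 4) := by
  have : 0 < p := one_pos.trans hp
  have : 0 < p - 1 := sub_pos.2 hp
  obtain ⟨C, hC, hscalar⟩ := exists_integral_norm_rpow_le_laplacian E F hp hpd
  set S := ∑ j, ∑ k, |a j k|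
  refine ⟨1 / (2 * p) * (S + 1) * C, by positivity, fun ψ => ?_⟩
  set X := (∑ j, ∫ x, ‖Δ (ψ j) x‖ ^ 2) ^ ((p - 1) * finrank ℝ E / 4) *
    (∑ j, ∫ x, ‖ψ j x‖ ^ 2) ^ ((finrank ℝ E - p * ((finrank ℝ E : ℝ) - 4)) / 4) with hX
  have hcomponent : ∀ j, ∫ x, ‖ψ j x‖ ^ (2 * p) ≤ C * X := fun j => by
    refine (hscalar (ψ j)).trans ?_
    have : 0 ≤ (finrank ℝ E - p * ((finrank ℝ E : ℝ) - 4)) / 4 := by linarith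
    rw [hX]
    gcongr
    · exact single_le_sum (f := fun j => ∫ x, ‖Δ (ψ j) x‖ ^ 2) (fun j _ => by positivity)
        (mem_univ j)
    · exact single_le_sum (f := fun j => ∫ x, ‖ψ j x‖ ^ 2) (fun j _ => by positivity)
        (mem_univ j)
  have hsum := sum_mul_integral_norm_rpow_mul_norm_rpow_le a
    (fun j => integrable_schwartz_norm_rpow (ψ j) (by positivity)) hcomponent
  calc (1 / (2 * p)) * ∑ j, ∑ k, a j k * ∫ x, ‖ψ j x‖ ^ p * ‖ψ k x‖ ^ p
      ≤ 1 / (2 * p) * (S * (C * X)) := by gcongr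
    _ ≤ 1 / (2 * p) * ((S + 1) * (C * X)) := by
        gcongr
        linarith
    _ = _ := by
        rw [hX]
        ring

end Sobolev

theorem lap_eq_laplacian {N : ℕ} {F : Type*} [NormedAddCommGroup F] [NormedSpace ℝ F]
    (u : EuclideanSpace ℝ (Fin N) → F) : lap u = Δ u := by
  rw [InnerProductSpace.laplacian_eq_iteratedFDeriv_orthonormalBasis u
    (EuclideanSpace.basisFun (Fin N) ℝ)]
  ext x
  refine sum_congr rfl fun i _ => congrArg _ ?_
  ext j
  fin_cases j <;> simp

theorem mul_sub_four_le_of_lt_div {N : ℕ} (hN : 4 ≤ N) {p : ℝ}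
    (hpN : 5 ≤ N → p < (N : ℝ) / ((N : ℝ) - 4)) : p * ((N : ℝ) - 4) ≤ N := by
  rcases hN.eq_or_lt with rfl | hN5
  · norm_num
  · have : (4 : ℝ) < N := by exact_mod_cast hN5
    exact ((lt_div_iff₀ (sub_pos.2 this)).1 (hpN hN5)).le

/-- **Vector Gagliardo–Nirenberg inequality.** -/
theorem vector_gagliardo_nirenberg (N m : ℕ) (hN : 4 ≤ N) (p : ℝ) (hp : 1 < p)
    (hpN : 5 ≤ N → p < (N : ℝ) / ((N : ℝ) - 4))
    (a : Fin m → Fin m → ℝ) (hsymm : ∀ j k, a j k = a k j)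
    (hnonneg : ∀ j k, 0 ≤ a j k) :
    ∃ C : ℝ, 0 < C ∧
      ∀ ψ : Fin m → SchwartzMap (EuclideanSpace ℝ (Fin N)) ℂ,
        (1 / (2 * p)) * ∑ j, ∑ k, a j k * ∫ x, ‖ψ j x‖ ^ p * ‖ψ k x‖ ^ p ≤
          C * (∑ j, ∫ x, ‖lap (⇑(ψ j)) x‖ ^ 2) ^ ((p - 1) * (N : ℝ) / 4) *
            (∑ j, ∫ x, ‖ψ j x‖ ^ 2) ^ (((N : ℝ) - p * ((N : ℝ) - 4)) / 4) := by
  have : Nonempty (Fin N) := ⟨⟨0, by lia⟩⟩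
  have hpd := mul_sub_four_le_of_lt_div hN hpN
  simpa only [lap_eq_laplacian, ← SchwartzMap.laplacian_apply, finrank_euclideanSpace_fin] using
    vector_gagliardo_nirenberg_general (EuclideanSpace ℝ (Fin N)) ℂ hp
      (by rwa [finrank_euclideanSpace_fin]) a
end
end

section
/- Pohozaev-type norm identities for solutions: Let N ≥ 4 be an integer, p > 1, and (a_{jk})_{1≤j,k≤m} a symmetric matrix of real numbers. Suppose Ψ = (ψ_1,…,ψ_m) is an m-tuple of Schwartz functions ℝ^N → ℂ solving Δ²ψ_j + ψ_j = Σ_{k=1}^m a_{jk} |ψ_k|^p |ψ_j|^{p-2} ψ_j pointwise on ℝ^N for each j. Set Q := Σ_{j,k=1}^m a_{jk} ∫_{ℝ^N} |ψ_j ψ_k|^p dx. Then Σ_{j=1}^m ‖ψ_j‖² = (1 − N/4 + N/(4p)) Q and Σ_{j=1}^m ‖Δψ_j‖² = (N(p-1)/(4p)) Q. -/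
open MeasureTheory Finset

noncomputable section

/-!
The system is the Euler–Lagrange equation of an action whose interaction term is `∫ W`, where
`W x = ∑ j, ∑ k, a j k * (‖u j x‖ * ‖u k x‖) ^ p`. Write `d` for the dimension and test its weak
form against two variations. The scaling `u ↦ c • u` gives the Nehari identity
`∑ ‖Δ u j‖² + ∑ ‖u j‖² = ∫ W`. The dilation `u ↦ u (c • ·)`, whose generator is
`D u x = fderiv ℝ u x x`, gives the Pohozaev identity
`(2 - d / 2) ∑ ‖Δ u j‖² - (d / 2) ∑ ‖u j‖² = -(d / (2 * p)) ∫ W`: on the left because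
`[Δ, D] = 2 Δ` and `D + d / 2` is skew-adjoint, on the right because the sum over `j` of the
tested nonlinearities is `(2 * p)⁻¹ * fderiv ℝ W x x`, by the symmetry of `a`. These are two linear
equations in the two unknown sums. Only `C¹` regularity of `W` is available, since `‖u j‖ ^ p` need
not be smooth where `u j` vanishes.
-/

open scoped SchwartzMap LineDeriv Laplacian InnerProductSpace

section RapidDecay

variable {E F : Type*} [NormedAddCommGroup E] [NormedAddCommGroup F]

/-- Functions decaying faster than every power of `‖x‖⁻¹`, with no regularity attached. -/
def RapidlyDecreasing (f : E → F) : Prop :=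
  ∀ k : ℕ, ∃ C, ∀ x, ‖x‖ ^ k * ‖f x‖ ≤ C

namespace RapidlyDecreasing

variable {G : Type*} [NormedAddCommGroup G] {f g : E → F}

lemma of_norm_le_mul {h : E → G} (hh : RapidlyDecreasing h) {C : ℝ}
    (hle : ∀ x, ‖f x‖ ≤ C * ‖h x‖) : RapidlyDecreasing f := by
  intro k
  obtain ⟨D, hD⟩ := hh k
  refine ⟨|C| * D, fun x ↦ ?_⟩
  calc ‖x‖ ^ k * ‖f x‖ ≤ ‖x‖ ^ k * (|C| * ‖h x‖) := by
        gcongr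
        exact (hle x).trans (by gcongr; exact le_abs_self C)
    _ = |C| * (‖x‖ ^ k * ‖h x‖) := by ring
    _ ≤ |C| * D := by gcongr; exact hD x

lemma exists_norm_le (hf : RapidlyDecreasing f) : ∃ C, ∀ x, ‖f x‖ ≤ C := by
  simpa using hf 0

lemma add (hf : RapidlyDecreasing f) (hg : RapidlyDecreasing g) : RapidlyDecreasing (f + g) := by
  intro k
  obtain ⟨C, hC⟩ := hf k
  obtain ⟨D, hD⟩ := hg k
  refine ⟨C + D, fun x ↦ ?_⟩
  calc ‖x‖ ^ k * ‖f x + g x‖ ≤ ‖x‖ ^ k * (‖f x‖ + ‖g x‖) := by gcongr; exact norm_add_le _ _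
    _ = ‖x‖ ^ k * ‖f x‖ + ‖x‖ ^ k * ‖g x‖ := mul_add _ _ _
    _ ≤ C + D := add_le_add (hC x) (hD x)

lemma integrable_pow_mul [NormedSpace ℝ E] [FiniteDimensional ℝ E] [MeasurableSpace E]
    [BorelSpace E] {μ : Measure E} [μ.HasTemperateGrowth] (hf : RapidlyDecreasing f)
    (hcont : Continuous f) (k : ℕ) : Integrable (fun x ↦ ‖x‖ ^ k * ‖f x‖) μ := by
  obtain ⟨C, hC⟩ := hf.exists_norm_le
  obtain ⟨D, hD⟩ := hf (k + μ.integrablePower)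
  exact integrable_of_le_of_pow_mul_le hC hD hcont.aestronglyMeasurable

lemma integrable [NormedSpace ℝ E] [FiniteDimensional ℝ E] [MeasurableSpace E]
    [BorelSpace E] {μ : Measure E} [μ.HasTemperateGrowth] (hf : RapidlyDecreasing f)
    (hcont : Continuous f) : Integrable f μ :=
  (hf.integrable_pow_mul hcont 0).mono' hcont.aestronglyMeasurable (.of_forall fun x ↦ by simp)

lemma integrable_inner_smul [InnerProductSpace ℝ E] [FiniteDimensional ℝ E] [MeasurableSpace E]
    [BorelSpace E] {μ : Measure E} [μ.HasTemperateGrowth] [NormedSpace ℝ F]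
    (hf : RapidlyDecreasing f) (hcont : Continuous f) (v : E) :
    Integrable (fun x ↦ ⟪v, x⟫_ℝ • f x) μ := by
  refine ((hf.integrable_pow_mul hcont 1).const_mul ‖v‖).mono'
    (by fun_prop) (.of_forall fun x ↦ ?_)
  rw [norm_smul, pow_one, ← mul_assoc]
  gcongr
  exact norm_inner_le_norm v x

end RapidlyDecreasing

variable [NormedSpace ℝ E] [NormedSpace ℝ F]

lemma rapidlyDecreasing_schwartzMap (u : 𝓢(E, F)) : RapidlyDecreasing u := fun k ↦
  ⟨_, fun x ↦ SchwartzMap.norm_pow_mul_le_seminorm ℝ u k x⟩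

/-- `C¹` functions decreasing rapidly together with their derivative: the analogue of Schwartz
space for functions such as `‖u‖ ^ p`, with `u` Schwartz and `1 < p`, which need not be smooth. -/
structure RapidlyDecreasingC1 (f : E → F) : Prop where
  contDiff : ContDiff ℝ 1 f
  decay : RapidlyDecreasing f
  decay_fderiv : RapidlyDecreasing (fderiv ℝ f)

namespace RapidlyDecreasingC1

lemma differentiable {f : E → F} (hf : RapidlyDecreasingC1 f) : Differentiable ℝ f :=
  hf.contDiff.differentiable one_ne_zero

lemma continuous_fderiv {f : E → F} (hf : RapidlyDecreasingC1 f) : Continuous (fderiv ℝ f) :=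
  hf.contDiff.continuous_fderiv one_ne_zero

lemma zero : RapidlyDecreasingC1 (0 : E → F) where
  contDiff := contDiff_const
  decay _ := ⟨0, by simp⟩
  decay_fderiv _ := ⟨0, by simp⟩

lemma add {f g : E → F} (hf : RapidlyDecreasingC1 f) (hg : RapidlyDecreasingC1 g) :
    RapidlyDecreasingC1 (f + g) where
  contDiff := hf.contDiff.add hg.contDiff
  decay := hf.decay.add hg.decay
  decay_fderiv := by
    have hderiv : fderiv ℝ (f + g) = fderiv ℝ f + fderiv ℝ g :=
      funext fun x ↦ fderiv_add (hf.differentiable x) (hg.differentiable x)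
    exact hderiv ▸ hf.decay_fderiv.add hg.decay_fderiv

lemma sum {ι : Type*} {s : Finset ι} {f : ι → E → F} (hf : ∀ i ∈ s, RapidlyDecreasingC1 (f i)) :
    RapidlyDecreasingC1 (fun x ↦ ∑ i ∈ s, f i x) := by
  simpa only [Finset.sum_fn] using
    Finset.sum_induction f RapidlyDecreasingC1 (fun _ _ ↦ add) zero hf

lemma const_smul {f : E → F} (hf : RapidlyDecreasingC1 f) (c : ℝ) :
    RapidlyDecreasingC1 (fun x ↦ c • f x) where
  contDiff := hf.contDiff.const_smul c
  decay := hf.decay.of_norm_le_mul fun x ↦ (norm_smul c (f x)).le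
  decay_fderiv := hf.decay_fderiv.of_norm_le_mul (C := ‖c‖) fun x ↦ by
    rw [fderiv_fun_const_smul (hf.differentiable x), norm_smul]

lemma smul {f : E → ℝ} {g : E → F} (hf : RapidlyDecreasingC1 f) (hg : RapidlyDecreasingC1 g) :
    RapidlyDecreasingC1 (fun x ↦ f x • g x) := by
  obtain ⟨C, hC⟩ := hf.decay.exists_norm_le
  obtain ⟨D, hD⟩ := hg.decay.exists_norm_le
  have hleft : RapidlyDecreasing fun x ↦ f x • fderiv ℝ g x :=
    hg.decay_fderiv.of_norm_le_mul (C := C) fun x ↦ by rw [norm_smul]; gcongr; exact hC x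
  have hright : RapidlyDecreasing fun x ↦ (fderiv ℝ f x).smulRight (g x) :=
    hf.decay_fderiv.of_norm_le_mul (C := D) fun x ↦ by
      rw [ContinuousLinearMap.norm_smulRight_apply, mul_comm]; gcongr; exact hD x
  refine ⟨hf.contDiff.smul hg.contDiff,
    hg.decay.of_norm_le_mul (C := C) fun x ↦ by rw [norm_smul]; gcongr; exact hC x, ?_⟩
  have hderiv : fderiv ℝ (fun x ↦ f x • g x) =
      (fun x ↦ f x • fderiv ℝ g x) + fun x ↦ (fderiv ℝ f x).smulRight (g x) :=
    funext fun x ↦ fderiv_fun_smul (hf.differentiable x) (hg.differentiable x)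
  exact hderiv ▸ hleft.add hright

lemma norm_rpow {F : Type*} [NormedAddCommGroup F] [InnerProductSpace ℝ F] {u : E → F}
    (hu : RapidlyDecreasingC1 u) {p : ℝ} (hp : 1 < p) :
    RapidlyDecreasingC1 (fun x ↦ ‖u x‖ ^ p) := by
  obtain ⟨C, hC⟩ := hu.decay.exists_norm_le
  have hpow : ∀ x, ‖u x‖ ^ (p - 1) ≤ C ^ (p - 1) := fun x ↦
    Real.rpow_le_rpow (norm_nonneg _) (hC x) (by linarith)
  refine ⟨hu.contDiff.norm_rpow hp, hu.decay.of_norm_le_mul (C := C ^ (p - 1)) fun x ↦ ?_,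
    hu.decay_fderiv.of_norm_le_mul (C := p * C ^ (p - 1)) fun x ↦ ?_⟩
  · calc ‖‖u x‖ ^ p‖ = ‖u x‖ ^ (p - 1) * ‖u x‖ := by
          rw [Real.norm_of_nonneg (by positivity),
            ← Real.rpow_add_one' (norm_nonneg _) (by linarith), sub_add_cancel]
      _ ≤ C ^ (p - 1) * ‖u x‖ := by gcongr ?_ * _; exact hpow x
  · refine (norm_fderiv_norm_rpow_le hu.differentiable hp).trans ?_
    gcongr p * ?_ * _
    exact hpow x

end RapidlyDecreasingC1

lemma rapidlyDecreasingC1_schwartzMap (u : 𝓢(E, F)) : RapidlyDecreasingC1 u where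
  contDiff := u.smooth 1
  decay := rapidlyDecreasing_schwartzMap u
  decay_fderiv := rapidlyDecreasing_schwartzMap (SchwartzMap.fderivCLM ℝ E F u)

lemma fderiv_norm_rpow_apply {F : Type*} [NormedAddCommGroup F] [InnerProductSpace ℝ F]
    {u : E → F} (hu : Differentiable ℝ u) {p : ℝ} (hp : 1 < p) (x v : E) :
    fderiv ℝ (fun y ↦ ‖u y‖ ^ p) x v = p * ‖u x‖ ^ (p - 2) * ⟪u x, fderiv ℝ u x v⟫_ℝ := by
  simp [hu.fderiv_norm_rpow hp]

end RapidDecay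

section IntegrationByParts

variable {E F : Type*} [NormedAddCommGroup E] [InnerProductSpace ℝ E] [FiniteDimensional ℝ E]
  [MeasurableSpace E] [BorelSpace E] {μ : Measure E} [μ.IsAddHaarMeasure]
  [NormedAddCommGroup F] [NormedSpace ℝ F] {f : E → F}

lemma integrable_inner_smul_fderiv (hf : RapidlyDecreasingC1 f) (v w : E) :
    Integrable (fun x ↦ ⟪v, x⟫_ℝ • fderiv ℝ f x w) μ := by
  refine RapidlyDecreasing.integrable_inner_smul ?_
    (hf.continuous_fderiv.clm_apply continuous_const) v
  refine hf.decay_fderiv.of_norm_le_mul (C := ‖w‖) fun x ↦ ?_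
  rw [mul_comm]
  exact (fderiv ℝ f x).le_opNorm w

lemma integral_inner_smul_fderiv (hf : RapidlyDecreasingC1 f) (v w : E) :
    ∫ x, ⟪v, x⟫_ℝ • fderiv ℝ f x w ∂μ = -(⟪v, w⟫_ℝ • ∫ x, f x ∂μ) := by
  have hinner : ∀ x, HasFDerivAt (fun y ↦ ⟪v, y⟫_ℝ) (innerSL ℝ v) x := fun x ↦
    (innerSL ℝ v).hasFDerivAt
  have hderiv : ∀ x, fderiv ℝ (fun y ↦ ⟪v, y⟫_ℝ) x w = ⟪v, w⟫_ℝ := fun x ↦ by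
    rw [(hinner x).fderiv, innerSL_apply_apply]
  have hint : Integrable (fun x ↦ ⟪v, w⟫_ℝ • f x) μ :=
    (hf.decay.integrable hf.contDiff.continuous).smul ⟪v, w⟫_ℝ
  rw [integral_smul_fderiv_eq_neg_fderiv_smul_of_integrable
    (by simpa only [hderiv] using hint) (integrable_inner_smul_fderiv hf v w)
    (hf.decay.integrable_inner_smul hf.contDiff.continuous v)
    (fun x _ ↦ (hinner x).differentiableAt) (fun x _ ↦ hf.differentiable x)]
  simp only [hderiv, integral_smul]

theorem integral_fderiv_apply_self (hf : RapidlyDecreasingC1 f) :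
    ∫ x, fderiv ℝ f x x ∂μ = -((Module.finrank ℝ E : ℝ) • ∫ x, f x ∂μ) := by
  let b := stdOrthonormalBasis ℝ E
  have hexpand : ∀ x, fderiv ℝ f x x = ∑ i, ⟪b i, x⟫_ℝ • fderiv ℝ f x (b i) := fun x ↦ by
    conv_lhs => rw [← b.sum_repr' x, map_sum]
    simp only [map_smul, b.sum_repr']
  simp only [hexpand]
  rw [integral_finsetSum _ fun i _ ↦ integrable_inner_smul_fderiv hf (b i) (b i)]
  simp [integral_inner_smul_fderiv hf, ← Nat.cast_smul_eq_nsmul ℝ]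

end IntegrationByParts

section EulerOperator

variable {E F : Type*} [NormedAddCommGroup E] [NormedSpace ℝ E]
  [NormedAddCommGroup F] [NormedSpace ℝ F]

/-- The Euler operator `x · ∇` on Schwartz functions, the infinitesimal generator of the
dilations `u ↦ u (c • ·)`. -/
def eulerOp : 𝓢(E, F) →L[ℝ] 𝓢(E, F) :=
  SchwartzMap.bilinLeftCLM (ContinuousLinearMap.id ℝ (E →L[ℝ] F)) .id ∘L
    SchwartzMap.fderivCLM ℝ E F

lemma eulerOp_apply (u : 𝓢(E, F)) (x : E) : eulerOp u x = fderiv ℝ u x x := rfl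

lemma fderiv_lineDeriv_apply (u : 𝓢(E, F)) (v w x : E) :
    fderiv ℝ (∂_{v} u : 𝓢(E, F)) x w = fderiv ℝ (fderiv ℝ u) x v w := by
  have hdiff : DifferentiableAt ℝ (fderiv ℝ u) x := (SchwartzMap.fderivCLM ℝ E F u).differentiableAt
  have hsymm : IsSymmSndFDerivAt ℝ u x := (u.smooth 2).contDiffAt.isSymmSndFDerivAt (by simp)
  have hcoe : ⇑(∂_{v} u : 𝓢(E, F)) = fun y ↦ fderiv ℝ u y v := rfl
  rw [hcoe, fderiv_clm_apply hdiff (differentiableAt_const v)]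
  simpa using hsymm w v

lemma lineDeriv_eulerOp (v : E) (u : 𝓢(E, F)) :
    ∂_{v} (eulerOp u) = ∂_{v} u + eulerOp (∂_{v} u) := by
  ext x
  have hdiff : DifferentiableAt ℝ (fderiv ℝ u) x := (SchwartzMap.fderivCLM ℝ E F u).differentiableAt
  have hcoe : ⇑(eulerOp u) = fun y ↦ fderiv ℝ u y y := rfl
  rw [SchwartzMap.lineDerivOp_apply_eq_fderiv, hcoe, fderiv_clm_apply hdiff differentiableAt_fun_id]
  simp [eulerOp_apply, fderiv_lineDeriv_apply, SchwartzMap.lineDerivOp_apply_eq_fderiv]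

lemma laplacian_eulerOp {E : Type*} [NormedAddCommGroup E] [InnerProductSpace ℝ E]
    [FiniteDimensional ℝ E] (u : 𝓢(E, F)) :
    Δ (eulerOp u) = (2 : ℝ) • Δ u + eulerOp (Δ u) := by
  simp only [SchwartzMap.laplacian_eq_sum (stdOrthonormalBasis ℝ E), lineDeriv_eulerOp,
    LineDeriv.lineDerivOp_add, map_sum, Finset.sum_add_distrib, two_smul, add_assoc]

end EulerOperator

section Variations

variable {E F : Type*} [NormedAddCommGroup E] [InnerProductSpace ℝ E] [FiniteDimensional ℝ E]
  [MeasurableSpace E] [BorelSpace E] {μ : Measure E} [μ.IsAddHaarMeasure]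
  [NormedAddCommGroup F] [InnerProductSpace ℝ F]

lemma integrable_inner_schwartzMap (u v : 𝓢(E, F)) : Integrable (fun x ↦ ⟪u x, v x⟫_ℝ) μ :=
  (SchwartzMap.pairing (innerSL ℝ) u v).integrable

lemma integral_inner_eulerOp_self (u : 𝓢(E, F)) :
    ∫ x, ⟪u x, eulerOp u x⟫_ℝ ∂μ = -(Module.finrank ℝ E / 2 : ℝ) * ∫ x, ‖u x‖ ^ 2 ∂μ := by
  have heuler := integral_fderiv_apply_self (μ := μ)
    ((rapidlyDecreasingC1_schwartzMap u).norm_rpow (one_lt_two (α := ℝ)))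
  simp only [fderiv_norm_rpow_apply u.differentiable (one_lt_two (α := ℝ)), sub_self,
    Real.rpow_zero, mul_one, integral_const_mul, ← eulerOp_apply] at heuler
  simp only [Real.rpow_two, smul_eq_mul] at heuler
  linarith

lemma integral_inner_laplacian_laplacian_eulerOp (u : 𝓢(E, F)) :
    ∫ x, ⟪Δ u x, Δ (eulerOp u) x⟫_ℝ ∂μ =
      (2 - Module.finrank ℝ E / 2 : ℝ) * ∫ x, ‖Δ u x‖ ^ 2 ∂μ := by
  have hcommutator : ∀ x, ⟪Δ u x, Δ (eulerOp u) x⟫_ℝ =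
      2 * ⟪Δ u x, Δ u x⟫_ℝ + ⟪Δ u x, eulerOp (Δ u) x⟫_ℝ := fun x ↦ by
    rw [laplacian_eulerOp, _root_.add_apply, _root_.smul_apply, inner_add_right, inner_smul_right]
  simp only [hcommutator]
  rw [integral_add ((integrable_inner_schwartzMap _ _).const_mul 2)
    (integrable_inner_schwartzMap _ _), integral_const_mul, integral_inner_eulerOp_self]
  simp only [real_inner_self_eq_norm_sq]
  ring

end Variations

section CoupledSystem

variable {ι E F : Type*} [NormedAddCommGroup F] {p : ℝ} {a : ι → ι → ℝ}

/-- The interaction energy density `∑ j k, a j k |u j u k| ^ p` of a system with coupling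
matrix `a`. -/
def couplingDensity [Fintype ι] (p : ℝ) (a : ι → ι → ℝ) (u : ι → E → F) (x : E) : ℝ :=
  ∑ j, ∑ k, a j k * (‖u j x‖ * ‖u k x‖) ^ p

/-- The nonlinearity `∑ k, a j k |u k| ^ p |u j| ^ (p - 2) u j` of the `j`-th equation, the
variational derivative in `u j` of `(2 * p)⁻¹ ∫ couplingDensity p a u` when `a` is symmetric. It
vanishes where `u j` does, whatever the value of `Real.rpow` at base `0`. -/
def couplingForce [Fintype ι] [NormedSpace ℝ F] (p : ℝ) (a : ι → ι → ℝ) (u : ι → E → F) (j : ι)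
    (x : E) : F :=
  ∑ k, (a j k * ‖u k x‖ ^ p * ‖u j x‖ ^ (p - 2)) • u j x

variable [InnerProductSpace ℝ F]

lemma sum_inner_couplingForce_self [Fintype ι] {u : ι → E → F} (hp : p ≠ 0) (x : E) :
    ∑ j, ⟪couplingForce p a u j x, u j x⟫_ℝ = couplingDensity p a u x := by
  refine Finset.sum_congr rfl fun j _ ↦ ?_
  rw [couplingForce, sum_inner]
  refine Finset.sum_congr rfl fun k _ ↦ ?_
  have hpow : ‖u j x‖ ^ (p - 2) * ‖u j x‖ ^ 2 = ‖u j x‖ ^ p := by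
    rw [← Real.rpow_two, ← Real.rpow_add' (norm_nonneg _) (by simpa using hp), sub_add_cancel]
  rw [real_inner_smul_left, real_inner_self_eq_norm_sq, mul_assoc, hpow,
    Real.mul_rpow (norm_nonneg _) (norm_nonneg _)]
  ring

section Calculus

variable [NormedAddCommGroup E] [NormedSpace ℝ E] {u : ι → E → F}

lemma rapidlyDecreasingC1_norm_mul_norm_rpow (hp : 1 < p) {f g : E → F}
    (hf : RapidlyDecreasingC1 f) (hg : RapidlyDecreasingC1 g) :
    RapidlyDecreasingC1 (fun x ↦ (‖f x‖ * ‖g x‖) ^ p) := by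
  simpa only [Real.mul_rpow (norm_nonneg _) (norm_nonneg _), smul_eq_mul] using
    (hf.norm_rpow hp).smul (hg.norm_rpow hp)

variable [Fintype ι]

lemma rapidlyDecreasingC1_couplingDensity (hp : 1 < p) (hu : ∀ j, RapidlyDecreasingC1 (u j)) :
    RapidlyDecreasingC1 (couplingDensity p a u) :=
  .sum fun j _ ↦ .sum fun k _ ↦
    (rapidlyDecreasingC1_norm_mul_norm_rpow hp (hu j) (hu k)).const_smul (a j k)

lemma fderiv_couplingDensity_apply (hp : 1 < p) (hu : ∀ j, Differentiable ℝ (u j)) (x v : E) :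
    fderiv ℝ (couplingDensity p a u) x v =
      ∑ j, ∑ k, a j k * (‖u j x‖ ^ p * fderiv ℝ (fun y ↦ ‖u k y‖ ^ p) x v +
        ‖u k x‖ ^ p * fderiv ℝ (fun y ↦ ‖u j y‖ ^ p) x v) := by
  have hpow : ∀ j, HasFDerivAt (fun y ↦ ‖u j y‖ ^ p) (fderiv ℝ (fun y ↦ ‖u j y‖ ^ p) x) x :=
    fun j ↦ ((differentiable_norm_rpow hp).comp (hu j) x).hasFDerivAt
  have hdensity : couplingDensity p a u =
      fun y ↦ ∑ j, ∑ k, a j k * (‖u j y‖ ^ p * ‖u k y‖ ^ p) := by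
    ext y
    simp only [couplingDensity, Real.mul_rpow (norm_nonneg _) (norm_nonneg _)]
  rw [hdensity, (HasFDerivAt.fun_sum fun j _ ↦ HasFDerivAt.fun_sum fun k _ ↦
    ((hpow j).fun_mul (hpow k)).const_mul (a j k)).fderiv]
  simp [_root_.sum_apply, mul_add]

lemma sum_inner_couplingForce_fderiv (hp : 1 < p) (hsymm : ∀ j k, a j k = a k j)
    (hu : ∀ j, Differentiable ℝ (u j)) (x v : E) :
    ∑ j, ⟪couplingForce p a u j x, fderiv ℝ (u j) x v⟫_ℝ =
      (2 * p)⁻¹ * fderiv ℝ (couplingDensity p a u) x v := by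
  have hforce : p * ∑ j, ⟪couplingForce p a u j x, fderiv ℝ (u j) x v⟫_ℝ =
      ∑ j, ∑ k, a j k * (‖u k x‖ ^ p * fderiv ℝ (fun y ↦ ‖u j y‖ ^ p) x v) := by
    simp only [couplingForce, sum_inner, real_inner_smul_left, Finset.mul_sum]
    refine Finset.sum_congr rfl fun j _ ↦ Finset.sum_congr rfl fun k _ ↦ ?_
    rw [fderiv_norm_rpow_apply (hu j) hp]
    ring
  have hswap : ∑ j, ∑ k, a j k * (‖u j x‖ ^ p * fderiv ℝ (fun y ↦ ‖u k y‖ ^ p) x v) =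
      ∑ j, ∑ k, a j k * (‖u k x‖ ^ p * fderiv ℝ (fun y ↦ ‖u j y‖ ^ p) x v) := by
    rw [Finset.sum_comm]
    exact Finset.sum_congr rfl fun j _ ↦ Finset.sum_congr rfl fun k _ ↦ by rw [hsymm]
  rw [fderiv_couplingDensity_apply hp hu, eq_inv_mul_iff_mul_eq₀ (by positivity), mul_assoc,
    hforce]
  simp only [mul_add, Finset.sum_add_distrib]
  rw [hswap, two_mul]

end Calculus

variable [Fintype ι] [NormedAddCommGroup E] [InnerProductSpace ℝ E] [FiniteDimensional ℝ E]
  [MeasurableSpace E] [BorelSpace E] {μ : Measure E} [μ.IsAddHaarMeasure] {u : ι → 𝓢(E, F)}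

lemma integral_couplingDensity (hp : 1 < p) :
    ∫ x, couplingDensity p a (fun j ↦ u j) x ∂μ =
      ∑ j, ∑ k, a j k * ∫ x, (‖u j x‖ * ‖u k x‖) ^ p ∂μ := by
  have hint : ∀ j k, Integrable (fun x ↦ a j k * (‖u j x‖ * ‖u k x‖) ^ p) μ := fun j k ↦ by
    have hC1 := rapidlyDecreasingC1_norm_mul_norm_rpow hp
      (rapidlyDecreasingC1_schwartzMap (u j)) (rapidlyDecreasingC1_schwartzMap (u k))
    exact (hC1.decay.integrable hC1.contDiff.continuous).const_mul (a j k)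
  simp only [couplingDensity]
  rw [integral_finsetSum _ fun j _ ↦ integrable_finsetSum _ fun k _ ↦ hint j k]
  refine Finset.sum_congr rfl fun j _ ↦ ?_
  rw [integral_finsetSum _ fun k _ ↦ hint j k]
  simp only [integral_const_mul]

lemma sum_integral_inner_eq_integral_couplingForce
    (hsol : ∀ j x, Δ (Δ (u j)) x + u j x = couplingForce p a (fun j ↦ u j) j x)
    (v : ι → 𝓢(E, F)) :
    ∑ j, ((∫ x, ⟪Δ (u j) x, Δ (v j) x⟫_ℝ ∂μ) + ∫ x, ⟪u j x, v j x⟫_ℝ ∂μ) =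
      ∫ x, ∑ j, ⟪couplingForce p a (fun j ↦ u j) j x, v j x⟫_ℝ ∂μ := by
  have hint : ∀ j, Integrable
      (fun x ↦ ⟪Δ (Δ (u j)) x, v j x⟫_ℝ + ⟪u j x, v j x⟫_ℝ) μ := fun j ↦
    (integrable_inner_schwartzMap _ _).add (integrable_inner_schwartzMap _ _)
  simp only [← hsol, inner_add_left]
  rw [integral_finsetSum _ fun j _ ↦ hint j]
  refine Finset.sum_congr rfl fun j _ ↦ ?_
  rw [integral_add (integrable_inner_schwartzMap _ _) (integrable_inner_schwartzMap _ _)]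
  congr 1
  exact SchwartzMap.integral_bilinear_laplacian_right_eq_left (Δ (u j)) (v j) (innerSL ℝ)

theorem nehari_identity (hp : p ≠ 0)
    (hsol : ∀ j x, Δ (Δ (u j)) x + u j x = couplingForce p a (fun j ↦ u j) j x) :
    (∑ j, ∫ x, ‖Δ (u j) x‖ ^ 2 ∂μ) + ∑ j, ∫ x, ‖u j x‖ ^ 2 ∂μ =
      ∫ x, couplingDensity p a (fun j ↦ u j) x ∂μ := by
  have hweak := sum_integral_inner_eq_integral_couplingForce (μ := μ) hsol u
  simpa only [Finset.sum_add_distrib, real_inner_self_eq_norm_sq,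
    sum_inner_couplingForce_self (u := fun j ↦ u j) hp] using hweak

theorem pohozaev_identity (hp : 1 < p) (hsymm : ∀ j k, a j k = a k j)
    (hsol : ∀ j x, Δ (Δ (u j)) x + u j x = couplingForce p a (fun j ↦ u j) j x) :
    (2 - Module.finrank ℝ E / 2 : ℝ) * (∑ j, ∫ x, ‖Δ (u j) x‖ ^ 2 ∂μ) -
        (Module.finrank ℝ E / 2 : ℝ) * ∑ j, ∫ x, ‖u j x‖ ^ 2 ∂μ =
      -(Module.finrank ℝ E / (2 * p)) * ∫ x, couplingDensity p a (fun j ↦ u j) x ∂μ := by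
  have hweak := sum_integral_inner_eq_integral_couplingForce (μ := μ) hsol fun j ↦ eulerOp (u j)
  have hdensity := integral_fderiv_apply_self (μ := μ) <|
    rapidlyDecreasingC1_couplingDensity (a := a) hp fun j ↦ rapidlyDecreasingC1_schwartzMap (u j)
  have hforce : ∀ x, ∑ j, ⟪couplingForce p a (fun j ↦ u j) j x, eulerOp (u j) x⟫_ℝ =
      (2 * p)⁻¹ * fderiv ℝ (couplingDensity p a fun j ↦ u j) x x := fun x ↦
    sum_inner_couplingForce_fderiv hp hsymm (fun j ↦ (u j).differentiable) x x
  simp only [integral_inner_laplacian_laplacian_eulerOp, integral_inner_eulerOp_self, hforce,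
    integral_const_mul, hdensity, Finset.sum_add_distrib, ← Finset.mul_sum, smul_eq_mul] at hweak
  linear_combination hweak

theorem pohozaev_norm_identities_general (hp : 1 < p) (hsymm : ∀ j k, a j k = a k j)
    (hsol : ∀ j x, Δ (Δ (u j)) x + u j x =
      ∑ k, (a j k * ‖u k x‖ ^ p * ‖u j x‖ ^ (p - 2)) • u j x)
    (Q : ℝ) (hQ : Q = ∑ j, ∑ k, a j k * ∫ x, (‖u j x‖ * ‖u k x‖) ^ p ∂μ) :
    (∑ j, ∫ x, ‖u j x‖ ^ 2 ∂μ) =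
        (1 - Module.finrank ℝ E / 4 + Module.finrank ℝ E / (4 * p)) * Q ∧
      (∑ j, ∫ x, ‖Δ (u j) x‖ ^ 2 ∂μ) = (Module.finrank ℝ E * (p - 1) / (4 * p)) * Q := by
  have hp0 : p ≠ 0 := by positivity
  have hQ' := hQ.trans (integral_couplingDensity hp).symm
  have hnehari := nehari_identity (μ := μ) hp0 hsol
  have hpohozaev := pohozaev_identity (μ := μ) hp hsymm hsol
  rw [← hQ'] at hnehari hpohozaev
  set d : ℝ := ((Module.finrank ℝ E : ℕ) : ℝ)
  have hlaplacian : (∑ j, ∫ x, ‖Δ (u j) x‖ ^ 2 ∂μ) = (d * (p - 1) / (4 * p)) * Q := by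
    linear_combination (d / 4) * hnehari + hpohozaev / 2 - (d / 4) * Q * mul_inv_cancel₀ hp0
  refine ⟨?_, hlaplacian⟩
  linear_combination hnehari - hlaplacian - (d / 4) * Q * mul_inv_cancel₀ hp0

end CoupledSystem

lemma lap_coe_schwartzMap {N : ℕ} {F : Type*} [NormedAddCommGroup F] [NormedSpace ℝ F]
    (f : 𝓢(EuclideanSpace ℝ (Fin N), F)) : lap f = Δ f := by
  ext x
  rw [SchwartzMap.laplacian_apply, InnerProductSpace.laplacian_eq_iteratedFDeriv_orthonormalBasis f
    (EuclideanSpace.basisFun (Fin N) ℝ), lap]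
  refine Finset.sum_congr rfl fun i _ ↦ congrArg _ (funext fun k ↦ ?_)
  fin_cases k <;> simp

/-- **Pohozaev-type norm identities for solutions of the stationary system.** -/
theorem pohozaev_norm_identities (N m : ℕ) (hN : 4 ≤ N) (p : ℝ) (hp : 1 < p)
    (a : Fin m → Fin m → ℝ) (hsymm : ∀ j k, a j k = a k j)
    (ψ : Fin m → SchwartzMap (EuclideanSpace ℝ (Fin N)) ℂ)
    (hsol : ∀ j x, lap (lap (⇑(ψ j))) x + ψ j x =
      ∑ k, ((a j k * ‖ψ k x‖ ^ p * ‖ψ j x‖ ^ (p - 2) : ℝ) : ℂ) * ψ j x)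
    (Q : ℝ) (hQ : Q = ∑ j, ∑ k, a j k * ∫ x, (‖ψ j x‖ * ‖ψ k x‖) ^ p) :
    (∑ j, ∫ x, ‖ψ j x‖ ^ 2) = (1 - (N : ℝ) / 4 + (N : ℝ) / (4 * p)) * Q ∧
    (∑ j, ∫ x, ‖lap (⇑(ψ j)) x‖ ^ 2) = ((N : ℝ) * (p - 1) / (4 * p)) * Q := by
  simpa only [lap_coe_schwartzMap, finrank_euclideanSpace_fin] using
    pohozaev_norm_identities_general hp hsymm
      (by simpa only [lap_coe_schwartzMap, Complex.real_smul] using hsol) Q hQ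
end
end

section
/- Solvability of the coupling system in the cubic case: Let m ≥ 2 be an integer, let μ_1,…,μ_m > 0, and let β > 0 satisfy either β < min{μ_1,…,μ_m} or β > max{μ_1,…,μ_m}. Then there exist real numbers c_1,…,c_m with c_j > 0 for every j such that μ_j c_j + β Σ_{k≠j} c_k = 1 for each j = 1,…,m. -/
open Finset

/-! Subtracting `β` from the diagonal turns the `j`-th equation into
`(μ_j - β) c_j + β S = 1` with `S = ∑ k, c_k`, so every `(μ_j - β) c_j` equals the same number `t`.
Summing `c_j = t / (μ_j - β)` over `j` gives `t = 1 / (1 + β ∑ k, 1 / (μ_k - β))`, so the solution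
is positive as soon as this denominator has the same sign as all the `μ_j - β`. If all `μ_j > β`,
it is clearly positive. If all `μ_j < β`, discarding all but one of the negative terms bounds it by
`1 + β / (μ_i - β) = μ_i / (μ_i - β) < 0`. -/

theorem mul_add_mul_sum_erase {ι R : Type*} [DecidableEq ι] [CommRing R] {s : Finset ι} {j : ι}
    (hj : j ∈ s) (a b : R) (c : ι → R) :
    a * c j + b * ∑ k ∈ s.erase j, c k = (a - b) * c j + b * ∑ k ∈ s, c k := by
  rw [← add_sum_erase s c hj]
  ring

section Field

variable {ι K : Type*} [Fintype ι] [Field K]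

/-- The factor `1 + β ∑ k, 1 / (μ_k - β)` by which the rank-one perturbation `β 𝟙 𝟙ᵀ` changes the
determinant of `diag (μ_k - β)`; the coupling matrix is the sum of these two matrices. -/
def couplingFactor (μ : ι → K) (β : K) : K :=
  1 + β * ∑ k, (μ k - β)⁻¹

/-- The solution of the coupling system `μ_j c_j + β ∑_{k ≠ j} c_k = 1` given by the
Sherman–Morrison formula. It satisfies the `j`-th equation only if neither inverse is taken
at `0`. -/
def couplingSolution (μ : ι → K) (β : K) (j : ι) : K :=
  (couplingFactor μ β)⁻¹ * (μ j - β)⁻¹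

theorem couplingSolution_spec [DecidableEq ι] {μ : ι → K} {β : K} {j : ι} (hj : μ j ≠ β)
    (hfactor : couplingFactor μ β ≠ 0) :
    μ j * couplingSolution μ β j + β * ∑ k ∈ univ.erase j, couplingSolution μ β k = 1 := by
  have hdiag : (μ j - β) * couplingSolution μ β j = (couplingFactor μ β)⁻¹ := by
    rw [couplingSolution, mul_left_comm, mul_inv_cancel₀ (sub_ne_zero.mpr hj), mul_one]
  have hsum : ∑ k, couplingSolution μ β k = (couplingFactor μ β)⁻¹ * ∑ k, (μ k - β)⁻¹ :=
    (mul_sum ..).symm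
  calc μ j * couplingSolution μ β j + β * ∑ k ∈ univ.erase j, couplingSolution μ β k
      = (μ j - β) * couplingSolution μ β j + β * ∑ k, couplingSolution μ β k :=
        mul_add_mul_sum_erase (mem_univ j) ..
    _ = (couplingFactor μ β)⁻¹ * couplingFactor μ β := by
        rw [hdiag, hsum, couplingFactor]
        ring
    _ = 1 := inv_mul_cancel₀ hfactor

end Field

section OrderedField

variable {ι K : Type*} [Fintype ι] [Field K] [LinearOrder K] [IsStrictOrderedRing K]
  {μ : ι → K} {β : K}

theorem couplingFactor_pos (hβ : 0 ≤ β) (hlt : ∀ j, β < μ j) : 0 < couplingFactor μ β := by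
  have hsum : 0 ≤ ∑ k, (μ k - β)⁻¹ :=
    sum_nonneg fun k _ ↦ inv_nonneg.mpr (sub_nonneg.mpr (hlt k).le)
  exact add_pos_of_pos_of_nonneg one_pos (mul_nonneg hβ hsum)

theorem couplingFactor_neg [Nonempty ι] (hμ : ∀ j, 0 < μ j) (hlt : ∀ j, μ j < β) :
    couplingFactor μ β < 0 := by
  classical
  obtain ⟨i⟩ := ‹Nonempty ι›
  have hneg (k : ι) : (μ k - β)⁻¹ < 0 := inv_lt_zero.mpr (sub_neg.mpr (hlt k))
  have hsum : ∑ k, (μ k - β)⁻¹ ≤ (μ i - β)⁻¹ := by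
    rw [← add_sum_erase univ _ (mem_univ i)]
    exact add_le_of_nonpos_right (sum_nonpos fun k _ ↦ (hneg k).le)
  calc couplingFactor μ β
      ≤ 1 + β * (μ i - β)⁻¹ := by
        have hβ : 0 ≤ β := ((hμ i).trans (hlt i)).le
        unfold couplingFactor
        gcongr
    _ = μ i * (μ i - β)⁻¹ := by
        have hi : μ i - β ≠ 0 := (sub_neg.mpr (hlt i)).ne
        field_simp
        ring
    _ < 0 := mul_neg_of_pos_of_neg (hμ i) (hneg i)

theorem coupling_system_solvable_general [DecidableEq ι] (hμ : ∀ j, 0 < μ j) (hβ : 0 ≤ β)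
    (hsep : (∀ j, β < μ j) ∨ (∀ j, μ j < β)) :
    ∃ c : ι → K, (∀ j, 0 < c j) ∧ ∀ j, μ j * c j + β * ∑ k ∈ univ.erase j, c k = 1 := by
  rcases hsep with hlt | hgt
  · have hfactor : 0 < couplingFactor μ β := couplingFactor_pos hβ hlt
    exact ⟨couplingSolution μ β,
      fun j ↦ mul_pos (inv_pos.mpr hfactor) (inv_pos.mpr (sub_pos.mpr (hlt j))),
      fun j ↦ couplingSolution_spec (hlt j).ne' hfactor.ne'⟩
  · have hfactor (j : ι) : couplingFactor μ β < 0 :=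
      have : Nonempty ι := ⟨j⟩
      couplingFactor_neg hμ hgt
    exact ⟨couplingSolution μ β,
      fun j ↦ mul_pos_of_neg_of_neg (inv_lt_zero.mpr (hfactor j))
        (inv_lt_zero.mpr (sub_neg.mpr (hgt j))),
      fun j ↦ couplingSolution_spec (hgt j).ne (hfactor j).ne⟩

end OrderedField

/-- **Solvability of the coupling system in the cubic case**: if `β > 0` lies below
`min μ_j` or above `max μ_j`, the linear system `μ_j c_j + β ∑_{k≠j} c_k = 1`
has a solution with all components positive. -/
theorem coupling_system_solvable (m : ℕ) (hm : 2 ≤ m)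
    (μ : Fin m → ℝ) (hμ : ∀ j, 0 < μ j) (β : ℝ) (hβ : 0 < β)
    (hsep : (∀ j, β < μ j) ∨ (∀ j, μ j < β)) :
    ∃ c : Fin m → ℝ, (∀ j, 0 < c j) ∧
      ∀ j, μ j * c j + β * ∑ k ∈ Finset.univ.erase j, c k = 1 :=
  coupling_system_solvable_general hμ hβ.le hsep
end
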